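/- arXiv:1909.01399 — 2 statements merged into one kernel-verified Lean document; each statement's English description precedes it below -/
import Mathlib

section
/- (Lemma 4, first inequality.) For every continuous function z on cl Ω_γ, ∫_{Ω_γ} (Iz)² χ² dx dy ≤ 2γ ∫_{Ω_γ} z² χ² dx dy. (On Ω_γ one has |y_m| < √(2γ), and χ² is nonincreasing in |y_m| along segments toward {y_m = 0}, which stay inside Ω_γ.) -/
open MeasureTheory Real Finset Function

noncomputable section

abbrev Pt (n m : ℕ) := (Fin n → ℝ) × (Fin m → ℝ)

def pd {n m : ℕ} (v : Pt n m) (f : Pt n m → ℝ) (p : Pt n m) : ℝ :=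
  lineDeriv ℝ f p v

def pd2 {n m : ℕ} (v w : Pt n m) (f : Pt n m → ℝ) (p : Pt n m) : ℝ :=
  lineDeriv ℝ (pd v f) p w

def ex {n m : ℕ} (i : Fin n) : Pt n m := (Pi.single i 1, 0)

def ey {n m : ℕ} (j : Fin m) : Pt n m := (0, Pi.single j 1)

def lastIdx (m : ℕ) [NeZero m] : Fin m :=
  ⟨m - 1, Nat.sub_lt (Nat.pos_of_ne_zero (NeZero.ne m)) one_pos⟩

def psiF {n m : ℕ} [NeZero n] (δ α₀ : ℝ) (x0 : Fin n → ℝ) (y0 : Fin m → ℝ) (p : Pt n m) : ℝ :=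
  δ * p.1 0 + (1/2) * ∑ i ∈ univ.erase (0 : Fin n), (p.1 i - x0 i)^2
    + (1/2) * ∑ j, (p.2 j - y0 j)^2 + α₀

def chiF {n m : ℕ} [NeZero n] (lam ν δ α₀ : ℝ) (x0 : Fin n → ℝ) (y0 : Fin m → ℝ) (p : Pt n m) : ℝ :=
  Real.exp (lam * (psiF δ α₀ x0 y0 p) ^ (-ν))

def OmegaG {n m : ℕ} [NeZero n] (δ γ α₀ : ℝ) (x0 : Fin n → ℝ) (y0 : Fin m → ℝ) : Set (Pt n m) :=
  {p | 0 < p.1 0 ∧ α₀ < psiF δ α₀ x0 y0 p ∧ psiF δ α₀ x0 y0 p < α₀ + γ}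

def L0 {n m : ℕ} [NeZero n] (η₀ : ℝ) (a : Fin m → Fin m → Pt n m → ℝ)
    (φ : Pt n m → ℝ) (p : Pt n m) : ℝ :=
  (p.1 0 + η₀)⁻¹ * pd2 (ex 0) (ex 0) φ p
    + (p.1 0 + η₀) *
      ((∑ i ∈ univ.erase (0 : Fin n), pd2 (ex i) (ex i) φ p)
        - ∑ i, ∑ j, a i j p * pd2 (ey i) (ey j) φ p)

def Iop {n m : ℕ} [NeZero m] (z : Pt n m → ℝ) (p : Pt n m) : ℝ :=
  ∫ τ in (0:ℝ)..(p.2 (lastIdx m)), z (p.1, Function.update p.2 (lastIdx m) τ)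

def C2Bound {n m : ℕ} (M : ℝ) (f : Pt n m → ℝ) : Prop :=
  ContDiff ℝ 2 f ∧ ∀ p : Pt n m, |f p| ≤ M ∧ ‖fderiv ℝ f p‖ ≤ M ∧ ‖fderiv ℝ (fderiv ℝ f) p‖ ≤ M

/-!
Along the segment from `(x, y′, 0)` to `(x, y′, y_m)` the function `ψ` is largest at the end point
`(x, y′, y_m)`, so the segment stays in `Ω_γ` and `χ²` is smallest at that end point. Hence the
weight can be moved inside the integral, and the Cauchy-Schwarz inequality gives
`(Iz)² χ² ≤ |y_m| ∫ z² χ²` over the segment. Since `|y_m| < √(2γ)` on `Ω_γ`, and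
`∫ |t| dt = γ` over each of the half-intervals `(0, √(2γ)]` and `(-√(2γ), 0]`, integrating in `y_m`
on the two sides of `y_m = 0` separately gives the constant `γ`; Tonelli's theorem then integrates
out the remaining variables. Working with lower Lebesgue integrals avoids showing that `Iz` is
measurable.
-/

section WeightedPrimitive

variable {E : Type*} [NormedAddCommGroup E] [NormedSpace ℝ E]

lemma enorm_integral_sq_le {X : Type*} [MeasurableSpace X] (μ : Measure X) (f : X → E) :
    ‖∫ x, f x ∂μ‖ₑ ^ 2 ≤ μ Set.univ * ∫⁻ x, ‖f x‖ₑ ^ 2 ∂μ := by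
  by_cases hf : AEStronglyMeasurable f μ
  · have hL1 : ‖∫ x, f x ∂μ‖ₑ ≤ eLpNorm f 1 μ := by
      rw [eLpNorm_one_eq_lintegral_enorm]
      exact enorm_integral_le_lintegral_enorm f
    have hL1L2 : eLpNorm f 1 μ ≤ eLpNorm f 2 μ * μ Set.univ ^ (1 / 2 : ℝ) := by
      convert! eLpNorm_le_eLpNorm_mul_rpow_measure_univ one_le_two hf using 3
      norm_num
    have hL2 : eLpNorm f 2 μ ^ 2 = ∫⁻ x, ‖f x‖ₑ ^ 2 ∂μ := by
      simpa using eLpNorm_nnreal_pow_eq_lintegral (f := f) (μ := μ) (p := 2) two_ne_zero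
    calc ‖∫ x, f x ∂μ‖ₑ ^ 2 ≤ (eLpNorm f 2 μ * μ Set.univ ^ (1 / 2 : ℝ)) ^ 2 := by
          gcongr
          exact hL1.trans hL1L2
      _ = μ Set.univ * ∫⁻ x, ‖f x‖ₑ ^ 2 ∂μ := by
          rw [mul_pow, hL2, mul_comm, ← ENNReal.rpow_mul_natCast]
          norm_num
  · simp [integral_non_aestronglyMeasurable hf]

lemma lintegral_uIoc_enorm_sub_left (a b : ℝ) :
    ∫⁻ t in Set.uIoc a b, ‖t - a‖ₑ = ENNReal.ofReal ((b - a) ^ 2 / 2) := by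
  have hint : IntegrableOn (fun t : ℝ => t - a) (Set.uIoc a b) volume :=
    Continuous.integrableOn_uIoc (μ := volume) (by fun_prop)
  rw [← ofReal_integral_norm_eq_lintegral_enorm hint]
  congr 1
  simpa [one_add_one_eq_two] using integral_pow_abs_sub_uIoc (a := a) (b := b) (n := 1)

lemma enorm_intervalIntegral_sq_mul_le {f : ℝ → E} {W : ℝ → ENNReal} {a t : ℝ}
    (hW : ∀ τ ∈ Set.uIoc a t, W t ≤ W τ) :
    ‖∫ τ in a..t, f τ‖ₑ ^ 2 * W t ≤ ‖t - a‖ₑ * ∫⁻ τ in Set.uIoc a t, ‖f τ‖ₑ ^ 2 * W τ := by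
  have hvol : volume.restrict (Set.uIoc a t) Set.univ = ‖t - a‖ₑ := by
    rw [Measure.restrict_apply_univ, Real.volume_uIoc, Real.enorm_eq_ofReal_abs]
  calc ‖∫ τ in a..t, f τ‖ₑ ^ 2 * W t
      = ‖∫ τ in Set.uIoc a t, f τ‖ₑ ^ 2 * W t := by
        rw [← ofReal_norm, intervalIntegral.norm_intervalIntegral_eq, ofReal_norm]
    _ ≤ ‖t - a‖ₑ * (∫⁻ τ in Set.uIoc a t, ‖f τ‖ₑ ^ 2) * W t := by
        gcongr
        exact hvol ▸ enorm_integral_sq_le _ f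
    _ ≤ ‖t - a‖ₑ * ∫⁻ τ in Set.uIoc a t, ‖f τ‖ₑ ^ 2 * W t := by
        rw [mul_assoc]
        gcongr
        exact lintegral_mul_const_le _ _
    _ ≤ ‖t - a‖ₑ * ∫⁻ τ in Set.uIoc a t, ‖f τ‖ₑ ^ 2 * W τ := by
        refine mul_le_mul_right (setLIntegral_mono' measurableSet_uIoc fun τ hτ => ?_) _
        gcongr
        exact hW τ hτ

lemma setLIntegral_uIoc_enorm_primitive_sq_mul_le (f : ℝ → E) {W : ℝ → ENNReal} {a b : ℝ}
    (hW : ∀ t ∈ Set.uIoc a b, ∀ τ ∈ Set.uIoc a t, W t ≤ W τ) :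
    ∫⁻ t in Set.uIoc a b, ‖∫ τ in a..t, f τ‖ₑ ^ 2 * W t ≤
      ENNReal.ofReal ((b - a) ^ 2 / 2) * ∫⁻ τ in Set.uIoc a b, ‖f τ‖ₑ ^ 2 * W τ := by
  rw [← lintegral_uIoc_enorm_sub_left, ← lintegral_mul_const _ (by fun_prop)]
  refine setLIntegral_mono' measurableSet_uIoc fun t ht => ?_
  have hsub : Set.uIoc a t ⊆ Set.uIoc a b :=
    Set.uIoc_subset_uIoc_of_uIcc_subset_uIcc
      (Set.uIcc_subset_uIcc_left (Set.uIoc_subset_uIcc ht))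
  calc ‖∫ τ in a..t, f τ‖ₑ ^ 2 * W t
      ≤ ‖t - a‖ₑ * ∫⁻ τ in Set.uIoc a t, ‖f τ‖ₑ ^ 2 * W τ :=
        enorm_intervalIntegral_sq_mul_le (hW t ht)
    _ ≤ ‖t - a‖ₑ * ∫⁻ τ in Set.uIoc a b, ‖f τ‖ₑ ^ 2 * W τ := by
        gcongr

lemma lintegral_enorm_primitive_sq_mul_le (f : ℝ → E) {W : ℝ → ENNReal} {r : ℝ}
    (hW : ∀ t, ∀ τ ∈ Set.uIoc 0 t, W t ≤ W τ) (hsupp : ∀ t, r ≤ |t| → W t = 0) :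
    ∫⁻ t, ‖∫ τ in 0..t, f τ‖ₑ ^ 2 * W t ≤
      ENNReal.ofReal (r ^ 2 / 2) * ∫⁻ τ, ‖f τ‖ₑ ^ 2 * W τ := by
  have hsplit (u : ℝ → ENNReal) : ∫⁻ t, u t * W t =
      (∫⁻ t in Set.uIoc 0 (-r), u t * W t) + ∫⁻ t in Set.uIoc 0 r, u t * W t := by
    have hdisj : Disjoint (Set.uIoc 0 (-r)) (Set.uIoc 0 r) := by
      rcases le_total 0 r with hr | hr <;> simp [Set.uIoc, hr]
    have hu : support (fun t => u t * W t) ⊆ Set.uIoc 0 (-r) ∪ Set.uIoc 0 r := fun t ht => by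
      have htr : |t| < r := not_le.1 fun h => ht (by simp [hsupp t h])
      have hr : 0 ≤ r := (abs_nonneg t).trans htr.le
      rw [Set.uIoc_of_ge (by linarith), Set.uIoc_of_le hr,
        Set.Ioc_union_Ioc_eq_Ioc (by linarith) hr]
      exact ⟨(abs_lt.1 htr).1, (abs_lt.1 htr).2.le⟩
    rw [← lintegral_union measurableSet_uIoc hdisj, setLIntegral_eq_of_support_subset hu]
  rw [hsplit (fun t => ‖∫ τ in 0..t, f τ‖ₑ ^ 2), hsplit (fun τ => ‖f τ‖ₑ ^ 2), mul_add]
  gcongr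
  · simpa using setLIntegral_uIoc_enorm_primitive_sq_mul_le f (b := -r) fun t _ => hW t
  · simpa using setLIntegral_uIoc_enorm_primitive_sq_mul_le f (b := r) fun t _ => hW t

end WeightedPrimitive

section Coordinate

variable {ι : Type*} [DecidableEq ι] {X : ι → Type*} [∀ i, MeasurableSpace (X i)]

/-- Splitting off the coordinate `l` of a dependent product, as a measurable equivalence; the split
coordinate is the second factor, so that it is the inner variable in Tonelli's theorem. -/
def piEquivProdAt (X : ι → Type*) [∀ i, MeasurableSpace (X i)] (l : ι) :
    (∀ i, X i) ≃ᵐ (∀ i : {i // i ≠ l}, X i) × X l :=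
  ((MeasurableEquiv.piEquivPiSubtypeProd X (· = l)).trans
    ((MeasurableEquiv.piUnique fun i : {i // i = l} => X i).prodCongr (.refl _))).trans
      MeasurableEquiv.prodComm

lemma piEquivProdAt_apply (l : ι) (y : ∀ i, X i) :
    piEquivProdAt X l y = (fun i : {i // i ≠ l} => y i, y l) := rfl

lemma update_piEquivProdAt_symm (l : ι) (b : ∀ i : {i // i ≠ l}, X i) (s t : X l) :
    update ((piEquivProdAt X l).symm (b, s)) l t = (piEquivProdAt X l).symm (b, t) := by
  have hfst : (fun i : {i // i ≠ l} => (piEquivProdAt X l).symm (b, s) i) = b :=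
    congrArg Prod.fst ((piEquivProdAt X l).apply_symm_apply (b, s))
  rw [MeasurableEquiv.eq_symm_apply, piEquivProdAt_apply, update_self, Prod.mk.injEq]
  exact ⟨(funext fun i => update_of_ne i.2 _ _).trans hfst, rfl⟩

variable [Fintype ι] {μ : ∀ i, Measure (X i)} [∀ i, SigmaFinite (μ i)]

lemma measurePreserving_piEquivProdAt (l : ι) :
    MeasurePreserving (piEquivProdAt X l) (Measure.pi μ)
      ((Measure.pi fun i : {i // i ≠ l} => μ i).prod (μ l)) := by
  let ν : Measure (∀ i : {i // i ≠ l}, X i) := Measure.pi fun i => μ i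
  refine .trans (.trans (measurePreserving_piEquivPiSubtypeProd μ (· = l)) ?_)
    Measure.measurePreserving_swap
  convert! (measurePreserving_piUnique fun i : {i // i = l} => μ i).prod (.id ν)

lemma lintegral_pi_le_of_lintegral_update_le (l : ι) {F G : (∀ i, X i) → ENNReal}
    (hG : AEMeasurable G (Measure.pi μ))
    (h : ∀ y, ∫⁻ t, F (update y l t) ∂μ l ≤ ∫⁻ t, G (update y l t) ∂μ l) :
    ∫⁻ y, F y ∂Measure.pi μ ≤ ∫⁻ y, G y ∂Measure.pi μ := by
  set e := piEquivProdAt X l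
  set ν : Measure (∀ i : {i // i ≠ l}, X i) := Measure.pi fun i => μ i
  have he : MeasurePreserving e.symm (ν.prod (μ l)) (Measure.pi μ) :=
    (measurePreserving_piEquivProdAt l).symm
  have hfiber (b : ∀ i : {i // i ≠ l}, X i) :
      ∫⁻ t, F (e.symm (b, t)) ∂μ l ≤ ∫⁻ t, G (e.symm (b, t)) ∂μ l := by
    rcases isEmpty_or_nonempty (X l) with hX | ⟨⟨s⟩⟩
    · simp [Measure.eq_zero_of_isEmpty]
    · simpa only [e, update_piEquivProdAt_symm] using h (e.symm (b, s))
  calc ∫⁻ y, F y ∂Measure.pi μ = ∫⁻ q, F (e.symm q) ∂ν.prod (μ l) := he.lintegral_map_equiv F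
    _ ≤ ∫⁻ b, ∫⁻ t, F (e.symm (b, t)) ∂μ l ∂ν := lintegral_prod_le _
    _ ≤ ∫⁻ b, ∫⁻ t, G (e.symm (b, t)) ∂μ l ∂ν := lintegral_mono hfiber
    _ = ∫⁻ q, G (e.symm q) ∂ν.prod (μ l) :=
        (lintegral_prod _ (hG.comp_quasiMeasurePreserving he.quasiMeasurePreserving)).symm
    _ = ∫⁻ y, G y ∂Measure.pi μ := (he.lintegral_map_equiv G).symm

lemma lintegral_prod_pi_le_of_lintegral_update_le {Y : Type*} [MeasurableSpace Y] {ν : Measure Y}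
    (l : ι) {F G : Y × (∀ i, X i) → ENNReal} (hG : AEMeasurable G (ν.prod (Measure.pi μ)))
    (h : ∀ x y, ∫⁻ t, F (x, update y l t) ∂μ l ≤ ∫⁻ t, G (x, update y l t) ∂μ l) :
    ∫⁻ p, F p ∂ν.prod (Measure.pi μ) ≤ ∫⁻ p, G p ∂ν.prod (Measure.pi μ) := by
  calc ∫⁻ p, F p ∂ν.prod (Measure.pi μ)
      ≤ ∫⁻ x, ∫⁻ y, F (x, y) ∂Measure.pi μ ∂ν := lintegral_prod_le F
    _ ≤ ∫⁻ x, ∫⁻ y, G (x, y) ∂Measure.pi μ ∂ν := by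
        refine lintegral_mono_ae ?_
        filter_upwards [hG.aestronglyMeasurable.prodMk_left] with x hx
        exact lintegral_pi_le_of_lintegral_update_le l hx.aemeasurable (h x)
    _ = ∫⁻ p, G p ∂ν.prod (Measure.pi μ) := (lintegral_prod G hG).symm

end Coordinate

lemma memLp_restrict_of_continuousOn_closure {X E : Type*} [PseudoMetricSpace X] [ProperSpace X]
    [MeasurableSpace X] [OpensMeasurableSpace X] [NormedAddCommGroup E]
    [SecondCountableTopologyEither X E] {μ : Measure X} [IsFiniteMeasureOnCompacts μ]
    {s : Set X} (hs : Bornology.IsBounded s) {f : X → E} (hf : ContinuousOn f (closure s))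
    (p : ENNReal) : MemLp f p (μ.restrict s) := by
  have hcompact : IsCompact (closure s) := hs.isCompact_closure
  have hmeas : MeasurableSet (closure s) := isClosed_closure.measurableSet
  have : IsFiniteMeasure (μ.restrict (closure s)) :=
    isFiniteMeasure_restrict.2 hcompact.measure_lt_top.ne
  obtain ⟨C, hC⟩ := hcompact.exists_bound_of_continuousOn hf
  exact (MemLp.of_bound (hf.aestronglyMeasurable hmeas) C
    (ae_restrict_of_forall_mem hmeas hC)).mono_measure
      (Measure.restrict_mono subset_closure le_rfl)

section Domain

variable {n m : ℕ} [NeZero n] {δ γ α₀ lam ν : ℝ} {x0 : Fin n → ℝ} {y0 : Fin m → ℝ}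

lemma continuous_psiF : Continuous (psiF δ α₀ x0 y0) := by
  unfold psiF
  fun_prop

lemma lt_psiF (hδ : 0 < δ) {p : Pt n m} (hp : 0 < p.1 0) : α₀ < psiF δ α₀ x0 y0 p :=
  lt_add_of_pos_left _ (by positivity)

lemma psiF_update_le {l : Fin m} (hl : y0 l = 0) (x : Fin n → ℝ) {y : Fin m → ℝ} {τ : ℝ}
    (hτ : |τ| ≤ |y l|) : psiF δ α₀ x0 y0 (x, update y l τ) ≤ psiF δ α₀ x0 y0 (x, y) := by
  have hsq (j : Fin m) : (update y l τ j - y0 j) ^ 2 ≤ (y j - y0 j) ^ 2 := by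
    rcases eq_or_ne j l with rfl | hj
    · simpa [hl] using sq_le_sq.2 hτ
    · rw [update_of_ne hj]
  have hsum := sum_le_sum fun j (_ : j ∈ univ) => hsq j
  unfold psiF
  gcongr _ + (1 / 2) * ?_ + _

lemma measurableSet_OmegaG : MeasurableSet (OmegaG δ γ α₀ x0 y0) := by
  have hx : Measurable fun p : Pt n m => p.1 0 := by fun_prop
  have hψ : Measurable (psiF δ α₀ x0 y0) := continuous_psiF.measurable
  exact (measurableSet_lt measurable_const hx).inter
    ((measurableSet_lt measurable_const hψ).inter (measurableSet_lt hψ measurable_const))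

lemma update_mem_OmegaG (hδ : 0 < δ) {l : Fin m} (hl : y0 l = 0) {x : Fin n → ℝ}
    {y : Fin m → ℝ} {τ : ℝ} (hp : (x, y) ∈ OmegaG δ γ α₀ x0 y0) (hτ : |τ| ≤ |y l|) :
    (x, update y l τ) ∈ OmegaG δ γ α₀ x0 y0 :=
  ⟨hp.1, lt_psiF hδ hp.1, (psiF_update_le hl x hτ).trans_lt hp.2.2⟩

lemma mul_fst_zero_lt_of_mem_OmegaG {p : Pt n m} (hp : p ∈ OmegaG δ γ α₀ x0 y0) :
    δ * p.1 0 < γ := by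
  have hψ : δ * p.1 0 + α₀ ≤ psiF δ α₀ x0 y0 p := by
    unfold psiF
    rw [add_assoc (δ * p.1 0)]
    gcongr
    exact le_add_of_nonneg_right (by positivity)
  linarith [hp.2.2]

lemma abs_fst_sub_lt_of_mem_OmegaG (hδ : 0 ≤ δ) {p : Pt n m} (hp : p ∈ OmegaG δ γ α₀ x0 y0)
    {i : Fin n} (hi : i ≠ 0) : |p.1 i - x0 i| < √(2 * γ) := by
  have hδx : 0 ≤ δ * p.1 0 := mul_nonneg hδ hp.1.le
  have hy : 0 ≤ ∑ j, (p.2 j - y0 j) ^ 2 := by positivity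
  have hx : (p.1 i - x0 i) ^ 2 ≤ ∑ i ∈ univ.erase 0, (p.1 i - x0 i) ^ 2 :=
    single_le_sum (f := fun i => (p.1 i - x0 i) ^ 2) (fun _ _ => sq_nonneg _) (by simpa)
  have hψ := hp.2.2
  unfold psiF at hψ
  refine Real.lt_sqrt_of_sq_lt ?_
  rw [sq_abs]
  linarith

lemma abs_snd_sub_lt_of_mem_OmegaG (hδ : 0 ≤ δ) {p : Pt n m} (hp : p ∈ OmegaG δ γ α₀ x0 y0)
    (j : Fin m) : |p.2 j - y0 j| < √(2 * γ) := by
  have hδx : 0 ≤ δ * p.1 0 := mul_nonneg hδ hp.1.le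
  have hx : 0 ≤ ∑ i ∈ univ.erase 0, (p.1 i - x0 i) ^ 2 := by positivity
  have hy : (p.2 j - y0 j) ^ 2 ≤ ∑ j, (p.2 j - y0 j) ^ 2 :=
    single_le_sum (f := fun j => (p.2 j - y0 j) ^ 2) (fun _ _ => sq_nonneg _) (mem_univ j)
  have hψ := hp.2.2
  unfold psiF at hψ
  refine Real.lt_sqrt_of_sq_lt ?_
  rw [sq_abs]
  linarith

lemma isBounded_OmegaG (hδ : 0 < δ) : Bornology.IsBounded (OmegaG δ γ α₀ x0 y0) := by
  rw [← Bornology.isBounded_image_fst_and_snd, ← Bornology.forall_isBounded_image_eval_iff,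
    ← Bornology.forall_isBounded_image_eval_iff]
  simp only [Set.image_image]
  refine ⟨fun i => ?_, fun j => ?_⟩
  · rcases eq_or_ne i 0 with rfl | hi
    · refine (Metric.isBounded_Icc 0 (γ / δ)).subset (Set.image_subset_iff.2 fun p hp => ?_)
      exact ⟨hp.1.le, (le_div_iff₀' hδ).2 (mul_fst_zero_lt_of_mem_OmegaG hp).le⟩
    · exact Metric.isBounded_ball.subset
        (Set.image_subset_iff.2 fun p hp => abs_fst_sub_lt_of_mem_OmegaG hδ.le hp hi)
  · exact Metric.isBounded_ball.subset
      (Set.image_subset_iff.2 fun p hp => abs_snd_sub_lt_of_mem_OmegaG hδ.le hp j)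

end Domain

section Weight

variable {n m : ℕ} [NeZero n] {δ γ α₀ lam ν : ℝ} {x0 : Fin n → ℝ} {y0 : Fin m → ℝ}

lemma chiF_pos {p : Pt n m} : 0 < chiF lam ν δ α₀ x0 y0 p :=
  Real.exp_pos _

lemma measurable_chiF : Measurable (chiF lam ν δ α₀ x0 y0) :=
  Real.measurable_exp.comp ((continuous_psiF.measurable.pow_const _).const_mul _)

lemma antitoneOn_exp_mul_rpow_neg (hlam : 0 ≤ lam) (hν : 0 ≤ ν) :
    AntitoneOn (fun s : ℝ => Real.exp (lam * s ^ (-ν))) (Set.Ioi 0) := fun _ hs _ _ hst =>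
  Real.exp_le_exp.2 <| mul_le_mul_of_nonneg_left
    (Real.rpow_le_rpow_of_nonpos hs hst (neg_nonpos.2 hν)) hlam

lemma chiF_le_chiF (hlam : 0 ≤ lam) (hν : 0 ≤ ν) {p q : Pt n m}
    (hp : 0 < psiF δ α₀ x0 y0 p) (hpq : psiF δ α₀ x0 y0 p ≤ psiF δ α₀ x0 y0 q) :
    chiF lam ν δ α₀ x0 y0 q ≤ chiF lam ν δ α₀ x0 y0 p :=
  antitoneOn_exp_mul_rpow_neg hlam hν hp (hp.trans_le hpq) hpq

lemma chiF_le_of_mem_OmegaG (hα₀ : 0 < α₀) (hlam : 0 ≤ lam) (hν : 0 ≤ ν) {p : Pt n m}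
    (hp : p ∈ OmegaG δ γ α₀ x0 y0) :
    chiF lam ν δ α₀ x0 y0 p ≤ Real.exp (lam * α₀ ^ (-ν)) :=
  antitoneOn_exp_mul_rpow_neg hlam hν hα₀ (hα₀.trans hp.2.1) hp.2.1.le

lemma integrableOn_sq_mul_chiF_sq (hα₀ : 0 < α₀) (hlam : 0 ≤ lam) (hν : 0 ≤ ν) {z : Pt n m → ℝ}
    (hz : MemLp z 2 (volume.restrict (OmegaG δ γ α₀ x0 y0))) :
    IntegrableOn (fun p => z p ^ 2 * chiF lam ν δ α₀ x0 y0 p ^ 2) (OmegaG δ γ α₀ x0 y0) := by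
  refine hz.integrable_sq.mul_bdd (c := Real.exp (lam * α₀ ^ (-ν)) ^ 2)
    (measurable_chiF.pow_const 2).aestronglyMeasurable
    (ae_restrict_of_forall_mem measurableSet_OmegaG fun p hp => ?_)
  rw [Real.norm_of_nonneg (by positivity)]
  gcongr
  · exact chiF_pos.le
  exact chiF_le_of_mem_OmegaG hα₀ hlam hν hp

/-- The weight `χ²` of the inequality, extended by zero outside `Ω_γ`. Star-shapedness of `Ω_γ` in
the direction `y_m` and monotonicity of `χ` then become one monotonicity property of this weight. -/
def chiSqWeight (lam ν δ γ α₀ : ℝ) (x0 : Fin n → ℝ) (y0 : Fin m → ℝ) : Pt n m → ENNReal :=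
  (OmegaG δ γ α₀ x0 y0).indicator fun p => ‖chiF lam ν δ α₀ x0 y0 p‖ₑ ^ 2

lemma aemeasurable_enorm_sq_mul_chiSqWeight {u : Pt n m → ℝ}
    (hu : AEMeasurable u (volume.restrict (OmegaG δ γ α₀ x0 y0))) :
    AEMeasurable fun p => ‖u p‖ₑ ^ 2 * chiSqWeight lam ν δ γ α₀ x0 y0 p := by
  have hindicator : (fun p => ‖u p‖ₑ ^ 2 * chiSqWeight lam ν δ γ α₀ x0 y0 p) =
      (OmegaG δ γ α₀ x0 y0).indicator fun p => ‖u p‖ₑ ^ 2 * ‖chiF lam ν δ α₀ x0 y0 p‖ₑ ^ 2 := by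
    ext p
    simp only [chiSqWeight, Set.indicator_mul_right]
  rw [hindicator, aemeasurable_indicator_iff measurableSet_OmegaG]
  exact (hu.enorm.pow_const 2).mul (measurable_chiF.enorm.pow_const 2).aemeasurable

lemma lintegral_enorm_sq_mul_chiSqWeight (u : Pt n m → ℝ) :
    ∫⁻ p, ‖u p‖ₑ ^ 2 * chiSqWeight lam ν δ γ α₀ x0 y0 p =
      ∫⁻ p in OmegaG δ γ α₀ x0 y0, ‖u p ^ 2 * chiF lam ν δ α₀ x0 y0 p ^ 2‖ₑ := by
  rw [← lintegral_indicator measurableSet_OmegaG]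
  congr with p
  by_cases hp : p ∈ OmegaG δ γ α₀ x0 y0 <;> simp [chiSqWeight, hp, enorm_mul, enorm_pow]

lemma chiSqWeight_le_update (hδ : 0 < δ) (hα₀ : 0 ≤ α₀) (hlam : 0 ≤ lam) (hν : 0 ≤ ν)
    {l : Fin m} (hl : y0 l = 0) (x : Fin n → ℝ) {y : Fin m → ℝ} {τ : ℝ} (hτ : |τ| ≤ |y l|) :
    chiSqWeight lam ν δ γ α₀ x0 y0 (x, y) ≤
      chiSqWeight lam ν δ γ α₀ x0 y0 (x, update y l τ) := by
  refine Set.indicator_apply_le' (fun hp => ?_) fun _ => zero_le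
  have hmem := update_mem_OmegaG hδ hl hp hτ
  have hχ := chiF_le_chiF hlam hν (hα₀.trans_lt hmem.2.1) (psiF_update_le hl x hτ)
  rw [chiSqWeight, Set.indicator_of_mem hmem]
  gcongr
  rw [Real.enorm_of_nonneg chiF_pos.le, Real.enorm_of_nonneg chiF_pos.le]
  exact ENNReal.ofReal_le_ofReal hχ

lemma chiSqWeight_eq_zero (hδ : 0 ≤ δ) {l : Fin m} (hl : y0 l = 0) {p : Pt n m}
    (hp : √(2 * γ) ≤ |p.2 l|) : chiSqWeight lam ν δ γ α₀ x0 y0 p = 0 := by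
  refine Set.indicator_of_notMem (fun hmem => hp.not_gt ?_) _
  simpa [hl] using abs_snd_sub_lt_of_mem_OmegaG hδ hmem l

end Weight

lemma Iop_update {n m : ℕ} [NeZero m] (z : Pt n m → ℝ) (x : Fin n → ℝ) (y : Fin m → ℝ) (t : ℝ) :
    Iop z (x, update y (lastIdx m) t) = ∫ τ in 0..t, z (x, update y (lastIdx m) τ) := by
  simp [Iop]

lemma lintegral_enorm_Iop_sq_mul_chiSqWeight_le {n m : ℕ} [NeZero n] [NeZero m]
    {δ γ α₀ lam ν : ℝ} {x0 : Fin n → ℝ} {y0 : Fin m → ℝ} (hδ : 0 < δ) (hγ : 0 ≤ γ)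
    (hα₀ : 0 ≤ α₀) (hlam : 0 ≤ lam) (hν : 0 ≤ ν) (hy0 : y0 (lastIdx m) = 0) {z : Pt n m → ℝ}
    (hz : AEMeasurable (fun p => ‖z p‖ₑ ^ 2 * chiSqWeight lam ν δ γ α₀ x0 y0 p)) :
    ∫⁻ p, ‖Iop z p‖ₑ ^ 2 * chiSqWeight lam ν δ γ α₀ x0 y0 p ≤
      ENNReal.ofReal γ * ∫⁻ p, ‖z p‖ₑ ^ 2 * chiSqWeight lam ν δ γ α₀ x0 y0 p := by
  rw [← lintegral_const_mul' _ _ ENNReal.ofReal_ne_top]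
  refine lintegral_prod_pi_le_of_lintegral_update_le (μ := fun _ => volume) (lastIdx m)
    (hz.const_mul _) fun x y => ?_
  simp only [Iop_update]
  have hr : √(2 * γ) ^ 2 / 2 = γ := by
    rw [Real.sq_sqrt (by positivity)]
    ring
  have hmono (t τ : ℝ) (hτ : τ ∈ Set.uIoc 0 t) :
      chiSqWeight lam ν δ γ α₀ x0 y0 (x, update y (lastIdx m) t) ≤
        chiSqWeight lam ν δ γ α₀ x0 y0 (x, update y (lastIdx m) τ) := by
    have hτt : |τ| ≤ |t| := by simpa using Set.abs_sub_left_of_mem_uIcc (Set.uIoc_subset_uIcc hτ)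
    simpa using chiSqWeight_le_update hδ hα₀ hlam hν hy0 x (y := update y (lastIdx m) t)
      (τ := τ) (by simpa using hτt)
  have hsupp (t : ℝ) (ht : √(2 * γ) ≤ |t|) :
      chiSqWeight lam ν δ γ α₀ x0 y0 (x, update y (lastIdx m) t) = 0 :=
    chiSqWeight_eq_zero hδ.le hy0 (by simpa using ht)
  rw [lintegral_const_mul' _ _ ENNReal.ofReal_ne_top]
  simpa only [hr] using lintegral_enorm_primitive_sq_mul_le
    (fun τ => z (x, update y (lastIdx m) τ)) hmono hsupp

theorem stmt4_general (n m : ℕ) [NeZero n] [NeZero m]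
    (δ γ α₀ lam ν : ℝ) (hδ : 0 < δ) (hγ : 0 ≤ γ) (hα₀ : 0 < α₀) (hlam : 0 ≤ lam) (hν : 0 ≤ ν)
    (x0 : Fin n → ℝ) (y0 : Fin m → ℝ) (hy0 : y0 (lastIdx m) = 0)
    (z : Pt n m → ℝ) (hz : MemLp z 2 (volume.restrict (OmegaG δ γ α₀ x0 y0))) :
    ∫ p in OmegaG δ γ α₀ x0 y0, (Iop z p) ^ 2 * (chiF lam ν δ α₀ x0 y0 p) ^ 2
      ≤ γ * ∫ p in OmegaG δ γ α₀ x0 y0, (z p) ^ 2 * (chiF lam ν δ α₀ x0 y0 p) ^ 2 := by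
  have hint := integrableOn_sq_mul_chiF_sq hα₀ hlam hν hz
  have hmeas := hz.aestronglyMeasurable.aemeasurable
  refine (ENNReal.ofReal_le_ofReal_iff
    (mul_nonneg hγ (integral_nonneg fun p => by positivity))).1 ?_
  calc ENNReal.ofReal (∫ p in OmegaG δ γ α₀ x0 y0, Iop z p ^ 2 * chiF lam ν δ α₀ x0 y0 p ^ 2)
      ≤ ∫⁻ p in OmegaG δ γ α₀ x0 y0, ‖Iop z p ^ 2 * chiF lam ν δ α₀ x0 y0 p ^ 2‖ₑ :=
        (Real.ofReal_le_enorm _).trans (enorm_integral_le_lintegral_enorm _)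
    _ ≤ ENNReal.ofReal γ *
          ∫⁻ p in OmegaG δ γ α₀ x0 y0, ‖z p ^ 2 * chiF lam ν δ α₀ x0 y0 p ^ 2‖ₑ := by
        simpa only [lintegral_enorm_sq_mul_chiSqWeight] using
          lintegral_enorm_Iop_sq_mul_chiSqWeight_le hδ hγ hα₀.le hlam hν hy0
            (aemeasurable_enorm_sq_mul_chiSqWeight hmeas)
    _ = ENNReal.ofReal
          (γ * ∫ p in OmegaG δ γ α₀ x0 y0, z p ^ 2 * chiF lam ν δ α₀ x0 y0 p ^ 2) := by
        rw [ENNReal.ofReal_mul hγ, ← ofReal_integral_norm_eq_lintegral_enorm hint]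
        simp only [norm_mul, norm_pow, Real.norm_eq_abs, sq_abs]

/-- (Lemma 4, first inequality.)  For every continuous function `z` on `cl Ω_γ`,
`∫_{Ω_γ} (Iz)² χ² ≤ 2γ ∫_{Ω_γ} z² χ²`, where `(Iz)(x,y) = ∫₀^{y_m} z(x,y′,τ) dτ`. -/
theorem stmt4 (n m : ℕ) [NeZero n] [NeZero m] (hn : 2 ≤ n) (hm : 2 ≤ m)
    (δ γ α₀ lam ν : ℝ) (hδ : 4 < δ) (hγ0 : 0 < γ) (hγ1 : γ < 1)
    (hα₀ : 0 < α₀) (hγα : γ + α₀ < 1) (hlam : 0 < lam) (hν : 1 < ν)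
    (x0 : Fin n → ℝ) (y0 : Fin m → ℝ) (hx0 : x0 0 = 0) (hy0 : y0 (lastIdx m) = 0)
    (z : Pt n m → ℝ) (hz : ContinuousOn z (closure (OmegaG δ γ α₀ x0 y0))) :
    ∫ p in OmegaG δ γ α₀ x0 y0, (Iop z p) ^ 2 * (chiF lam ν δ α₀ x0 y0 p) ^ 2
      ≤ 2 * γ * ∫ p in OmegaG δ γ α₀ x0 y0, (z p) ^ 2 * (chiF lam ν δ α₀ x0 y0 p) ^ 2 := by
  have hzL2 := memLp_restrict_of_continuousOn_closure (μ := volume)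
    (isBounded_OmegaG (zero_lt_four.trans hδ)) hz 2
  refine (stmt4_general n m δ γ α₀ lam ν (by linarith) hγ0.le hα₀ hlam.le (by linarith)
    x0 y0 hy0 z hzL2).trans ?_
  exact mul_le_mul_of_nonneg_right (by linarith) (integral_nonneg fun p => by positivity)
end
end

section
/- (Pointwise estimate (26) for the term T₃.) Let m ≥ 1, n ≥ 1, and let a_{ij} (1 ≤ i,j ≤ m) be C¹ symmetric functions on an open set U ⊂ ℝⁿ×ℝᵐ with |∂a_{ij}/∂y_j| ≤ M for all i,j and satisfying −Σ_{i,j=1}^m (∂a_{ij}/∂x₁) ξ_i ξ_j ≥ α₁ |ξ|² for all ξ ∈ ℝᵐ at every point of U, with α₁ > 0. Let λ, ν, δ, ε₀, η₀ > 0 and suppose x₁ + η₀ > 0 on U. Then for every ϑ ∈ C²(U), pointwise on U: −4λνδ ϑ_{x₁} Σ_{i,j=1}^m a_{ij} ϑ_{y_iy_j} ≥ −2λνδ Σ_{i,j=1}^m [ 2 ∂_{y_j}( a_{ij} ϑ_{y_i} ϑ_{x₁} ) − ∂_{x₁}( a_{ij} ϑ_{y_i} ϑ_{y_j} ) ] +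 2λνδ ( α₁ − m (x₁+η₀) ε₀ ) |∇_y ϑ|² − 2λνδ m² M² ε₀^{−1} (x₁+η₀)^{−1} ϑ_{x₁}², where ∇_y ϑ = (ϑ_{y₁},…,ϑ_{y_m}). -/
open MeasureTheory Real Finset Function

noncomputable section

/-! Write `u_i = ∂θ/∂y_i` and `w = ∂θ/∂x₁`. Expanding the divergence terms, the mixed derivatives
`∂u_i/∂x₁` enter only through `a_ij u_i (∂u_j/∂x₁) - a_ij (∂u_i/∂x₁) u_j`, whose sum vanishes by
symmetry of `a`. What survives besides `2 w ∑ a_ij θ_{y_i y_j}` is the quadratic form of `∂a/∂x₁`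
in `u`, controlled by monotonicity, and the cross terms `(∂a_ij/∂y_j) u_i w`, controlled by the
weighted Young inequality. -/

section LineDeriv

variable {𝕜 E F : Type*} [NontriviallyNormedField 𝕜] [NormedAddCommGroup E] [NormedSpace 𝕜 E]
  [NormedAddCommGroup F] [NormedSpace 𝕜 F]

open Topology in
theorem lineDeriv_eventuallyEq_fderiv_apply {f : E → F} {x : E} (hf : ContDiffAt 𝕜 1 f x) (v : E) :
    (fun y => lineDeriv 𝕜 f y v) =ᶠ[𝓝 x] fun y => fderiv 𝕜 f y v := by
  filter_upwards [hf.eventually (by simp)] with y hy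
  exact (hy.differentiableAt one_ne_zero).lineDeriv_eq_fderiv

theorem hasFDerivAt_lineDeriv {f : E → F} {x : E} (hf : ContDiffAt 𝕜 2 f x) (v : E) :
    HasFDerivAt (fun y => lineDeriv 𝕜 f y v) ((fderiv 𝕜 (fderiv 𝕜 f) x).flip v) x := by
  have hfderiv : DifferentiableAt 𝕜 (fderiv 𝕜 f) x :=
    (hf.fderiv_right (m := 1) one_add_one_eq_two.le).differentiableAt one_ne_zero
  have happly : HasFDerivAt (fun y => fderiv 𝕜 f y v) ((fderiv 𝕜 (fderiv 𝕜 f) x).flip v) x := by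
    simpa using hfderiv.hasFDerivAt.clm_apply (hasFDerivAt_const v x)
  exact happly.congr_of_eventuallyEq
    (lineDeriv_eventuallyEq_fderiv_apply (hf.of_le one_le_two) v)

theorem lineDeriv_lineDeriv_comm {f : E → F} {x : E} {n : WithTop ℕ∞} (hf : ContDiffAt 𝕜 n f x)
    (hn : minSmoothness 𝕜 2 ≤ n) (v w : E) :
    lineDeriv 𝕜 (fun y => lineDeriv 𝕜 f y v) x w =
      lineDeriv 𝕜 (fun y => lineDeriv 𝕜 f y w) x v := by
  have hf₂ : ContDiffAt 𝕜 2 f x := hf.of_le (le_minSmoothness.trans hn)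
  rw [((hasFDerivAt_lineDeriv hf₂ v).hasLineDerivAt w).lineDeriv,
    ((hasFDerivAt_lineDeriv hf₂ w).hasLineDerivAt v).lineDeriv]
  exact hf.isSymmSndFDerivAt hn w v

theorem lineDeriv_fun_mul_mul {𝔸 : Type*} [NormedRing 𝔸] [NormedAlgebra 𝕜 𝔸] {f g h : E → 𝔸}
    {x v : E} (hf : LineDifferentiableAt 𝕜 f x v) (hg : LineDifferentiableAt 𝕜 g x v)
    (hh : LineDifferentiableAt 𝕜 h x v) :
    lineDeriv 𝕜 (fun y => f y * g y * h y) x v =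
      lineDeriv 𝕜 f x v * g x * h x + f x * lineDeriv 𝕜 g x v * h x +
        f x * g x * lineDeriv 𝕜 h x v := by
  have hderiv := ((hf.hasLineDerivAt.fun_mul hg.hasLineDerivAt).fun_mul hh.hasLineDerivAt).deriv
  simpa only [zero_smul, add_zero, add_mul] using! hderiv

end LineDeriv

theorem sum_sum_mul_mul_comm_of_symm {ι R : Type*} [Fintype ι] [CommSemiring R] {A : ι → ι → R}
    (hA : ∀ i j, A i j = A j i) (u c : ι → R) :
    ∑ i, ∑ j, A i j * u i * c j = ∑ i, ∑ j, A i j * c i * u j := by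
  rw [Finset.sum_comm]
  refine Finset.sum_congr rfl fun i _ => Finset.sum_congr rfl fun j _ => ?_
  rw [hA j i, mul_right_comm]

theorem sum_lineDeriv_divergence_eq {𝕜 E ι : Type*} [NontriviallyNormedField 𝕜]
    [NormedAddCommGroup E] [NormedSpace 𝕜 E] [Fintype ι] {a : ι → ι → E → 𝕜} {u : ι → E → 𝕜}
    {w : E → 𝕜} {p v : E} {e : ι → E} (ha : ∀ i j, DifferentiableAt 𝕜 (a i j) p)
    (hu : ∀ i, DifferentiableAt 𝕜 (u i) p) (hw : DifferentiableAt 𝕜 w p)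
    (hsymm : ∀ i j, a i j p = a j i p)
    (hmixed : ∀ j, lineDeriv 𝕜 w p (e j) = lineDeriv 𝕜 (u j) p v) :
    ∑ i, ∑ j, (2 * lineDeriv 𝕜 (fun q => a i j q * u i q * w q) p (e j) -
        lineDeriv 𝕜 (fun q => a i j q * u i q * u j q) p v) =
      2 * w p * (∑ i, ∑ j, a i j p * lineDeriv 𝕜 (u i) p (e j)) +
        2 * (∑ i, ∑ j, lineDeriv 𝕜 (a i j) p (e j) * u i p * w p) -
        ∑ i, ∑ j, lineDeriv 𝕜 (a i j) p v * u i p * u j p := by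
  have hterm (i j : ι) :
      2 * lineDeriv 𝕜 (fun q => a i j q * u i q * w q) p (e j) -
          lineDeriv 𝕜 (fun q => a i j q * u i q * u j q) p v =
        2 * w p * (a i j p * lineDeriv 𝕜 (u i) p (e j)) +
          2 * (lineDeriv 𝕜 (a i j) p (e j) * u i p * w p) -
          lineDeriv 𝕜 (a i j) p v * u i p * u j p +
          (a i j p * u i p * lineDeriv 𝕜 (u j) p v -
            a i j p * lineDeriv 𝕜 (u i) p v * u j p) := by
    rw [lineDeriv_fun_mul_mul (ha i j).lineDifferentiableAt (hu i).lineDifferentiableAt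
        hw.lineDifferentiableAt,
      lineDeriv_fun_mul_mul (ha i j).lineDifferentiableAt (hu i).lineDifferentiableAt
        (hu j).lineDifferentiableAt, hmixed j]
    ring
  have hcancel := sum_sum_mul_mul_comm_of_symm hsymm (u · p) fun i => lineDeriv 𝕜 (u i) p v
  simp only [hterm, sum_add_distrib, sum_sub_distrib, ← mul_sum]
  rw [hcancel, sub_self, add_zero]

section Young

variable {K : Type*} [Field K] [LinearOrder K] [IsStrictOrderedRing K] {M ε : K}

theorem neg_young_le_two_mul_of_abs_le {b : K} (hε : 0 < ε) (hb : |b| ≤ M) (u w : K) :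
    -(ε * u ^ 2 + M ^ 2 * ε⁻¹ * w ^ 2) ≤ 2 * (b * u * w) := by
  have hyoung : 2 * -u * (b * w) ≤ ε * (-u) ^ 2 + ε⁻¹ * (b * w) ^ 2 := two_mul_le_add_mul_sq hε
  have hsq : b ^ 2 ≤ M ^ 2 := sq_le_sq.mpr (hb.trans (le_abs_self M))
  have hcoeff : ε⁻¹ * w ^ 2 * b ^ 2 ≤ ε⁻¹ * w ^ 2 * M ^ 2 := by gcongr
  linarith

theorem neg_young_le_two_mul_sum_of_abs_le {ι κ : Type*} [Fintype ι] [Fintype κ] {B : ι → κ → K}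
    (hε : 0 < ε) (hB : ∀ i j, |B i j| ≤ M) (u : ι → K) (w : K) :
    -(Fintype.card κ * ε * ∑ i, u i ^ 2 +
        Fintype.card ι * Fintype.card κ * M ^ 2 * ε⁻¹ * w ^ 2) ≤
      2 * ∑ i, ∑ j, B i j * u i * w := by
  have hsum : ∑ i, ∑ _j : κ, -(ε * u i ^ 2 + M ^ 2 * ε⁻¹ * w ^ 2) ≤
      ∑ i, ∑ j, 2 * (B i j * u i * w) :=
    sum_le_sum fun i _ => sum_le_sum fun j _ => neg_young_le_two_mul_of_abs_le hε (hB i j) _ _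
  simp only [← mul_sum, sum_neg_distrib, sum_const, card_univ, nsmul_eq_mul,
    sum_add_distrib] at hsum
  linarith

end Young

/-- The estimate for `T₃` is the case `c = λνδ`, `ε = (x₁+η₀)ε₀`. -/
theorem stmt14_general {E ι : Type*} [NormedAddCommGroup E] [NormedSpace ℝ E] [Fintype ι]
    {a : ι → ι → E → ℝ} {θ : E → ℝ} {p v : E} {e : ι → E} {M α c ε : ℝ} (hc : 0 ≤ c) (hε : 0 < ε)
    (ha : ∀ i j, DifferentiableAt ℝ (a i j) p) (hsymm : ∀ i j, a i j p = a j i p)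
    (haM : ∀ i j, |lineDeriv ℝ (a i j) p (e j)| ≤ M)
    (hmono : ∀ ξ : ι → ℝ,
      α * ∑ k, ξ k ^ 2 ≤ -∑ i, ∑ j, lineDeriv ℝ (a i j) p v * ξ i * ξ j)
    (hθ : ContDiffAt ℝ 2 θ p) :
    -4 * c * lineDeriv ℝ θ p v *
        ∑ i, ∑ j, a i j p * lineDeriv ℝ (fun q => lineDeriv ℝ θ q (e i)) p (e j) ≥
      -2 * c * (∑ i, ∑ j,
          (2 * lineDeriv ℝ (fun q => a i j q * lineDeriv ℝ θ q (e i) * lineDeriv ℝ θ q v) p (e j) -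
            lineDeriv ℝ (fun q => a i j q * lineDeriv ℝ θ q (e i) * lineDeriv ℝ θ q (e j)) p v)) +
        2 * c * (α - Fintype.card ι * ε) * ∑ j, lineDeriv ℝ θ p (e j) ^ 2 -
        2 * c * Fintype.card ι ^ 2 * M ^ 2 * ε⁻¹ * lineDeriv ℝ θ p v ^ 2 := by
  have hdiff (z : E) : DifferentiableAt ℝ (fun q => lineDeriv ℝ θ q z) p :=
    (hasFDerivAt_lineDeriv hθ z).differentiableAt
  have hmixed (j : ι) := lineDeriv_lineDeriv_comm hθ minSmoothness_of_isRCLikeNormedField.le v (e j)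
  rw [sum_lineDeriv_divergence_eq ha (fun i => hdiff (e i)) (hdiff v) hsymm hmixed]
  have hcross := neg_young_le_two_mul_sum_of_abs_le hε haM (fun i => lineDeriv ℝ θ p (e i))
    (lineDeriv ℝ θ p v)
  have hquad := hmono fun i => lineDeriv ℝ θ p (e i)
  have hsum := mul_le_mul_of_nonneg_left (add_le_add hcross hquad) (mul_nonneg zero_le_two hc)
  linarith

/-- (Pointwise estimate (26) for the term `T₃`.)  Let `a_{ij}` be `C¹` symmetric functions
on an open set `U ⊂ ℝⁿ×ℝᵐ` with `|∂a_{ij}/∂y_j| ≤ M` and satisfying the monotonicity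
condition `−Σ (∂a_{ij}/∂x₁) ξ_i ξ_j ≥ α₁|ξ|²` on `U`.  Then for every `ϑ ∈ C²(U)`,
pointwise on `U`:
`−4λνδ ϑ_{x₁} Σ a_{ij} ϑ_{y_iy_j} ≥ −2λνδ Σ [2 ∂_{y_j}(a_{ij} ϑ_{y_i} ϑ_{x₁}) − ∂_{x₁}(a_{ij} ϑ_{y_i} ϑ_{y_j})]`
`  + 2λνδ(α₁ − m(x₁+η₀)ε₀)|∇_y ϑ|² − 2λνδ m² M² ε₀^{−1} (x₁+η₀)^{−1} ϑ_{x₁}²`. -/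
theorem stmt14 (n m : ℕ) [NeZero n] [NeZero m] (hn : 1 ≤ n) (hm : 1 ≤ m)
    (M α₁ lam ν δ ε₀ η₀ : ℝ)
    (hM : 0 < M) (hα₁ : 0 < α₁) (hlam : 0 < lam) (hν : 0 < ν) (hδ : 0 < δ)
    (hε₀ : 0 < ε₀) (hη₀ : 0 < η₀)
    (U : Set (Pt n m)) (hU : IsOpen U)
    (hUx : ∀ p ∈ U, 0 < p.1 0 + η₀)
    (a : Fin m → Fin m → Pt n m → ℝ)
    (haC : ∀ i j, ContDiffOn ℝ 1 (a i j) U)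
    (hsym : ∀ i j, a i j = a j i)
    (haM : ∀ i j, ∀ p ∈ U, |pd (ey j) (a i j) p| ≤ M)
    (h4 : ∀ p ∈ U, ∀ ξ : Fin m → ℝ,
      α₁ * ∑ k, ξ k ^ 2 ≤ -(∑ i, ∑ j, pd (ex 0) (a i j) p * ξ i * ξ j))
    (θ : Pt n m → ℝ) (hθ : ContDiffOn ℝ 2 θ U) :
    ∀ p ∈ U,
      -4 * lam * ν * δ * pd (ex 0) θ p * ∑ i, ∑ j, a i j p * pd2 (ey i) (ey j) θ p
        ≥ -2 * lam * ν * δ *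
            (∑ i, ∑ j,
              (2 * pd (ey j) (fun q => a i j q * pd (ey i) θ q * pd (ex 0) θ q) p
                - pd (ex 0) (fun q => a i j q * pd (ey i) θ q * pd (ey j) θ q) p))
          + 2 * lam * ν * δ * (α₁ - m * (p.1 0 + η₀) * ε₀) * ∑ j, (pd (ey j) θ p) ^ 2
          - 2 * lam * ν * δ * m ^ 2 * M ^ 2 * ε₀⁻¹ * (p.1 0 + η₀)⁻¹ * (pd (ex 0) θ p) ^ 2 := by
  intro p hp
  have hUp := hU.mem_nhds hp
  simpa only [Fintype.card_fin, mul_inv_rev, ← mul_assoc] using!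
    stmt14_general (c := lam * ν * δ) (by positivity) (mul_pos (hUx p hp) hε₀)
      (fun i j => ((haC i j).contDiffAt hUp).differentiableAt one_ne_zero)
      (fun i j => congrFun (hsym i j) p) (fun i j => haM i j p hp) (h4 p hp) (hθ.contDiffAt hUp)
end
end
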